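/- Let m ≥ 1 be an integer and let p ∈ ℂ be such that (2 − p)/4 does not lie on the closed negative real axis (in particular p ≠ 2). For real ν > 0 define E(ν) := ν²·Γ(m)²·Γ(2iν + 1 − m)²·(p − 2)/(16^{2iν}·Γ(1 + iν)⁴), where Γ is the complex Gamma function and 16^{2iν} = exp(2iν·ln 16). Then E(ν) → (2 − p)/4 as ν → 0⁺, and ( −(i/2)·Log E(ν) + (i/2)·Log((2 − p)/4) ) / ν tends to 2·( Σ_{k=1}^{m−1} 1/k − 2·ln 2 ) as ν → 0⁺, where Log is the principal branch of the complex logarithm. -/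

import Mathlib

open Complex

/-- The quantity whose principal logarithm gives the integration constant in the
resonant case `2μ = 2iν + 1 − 2m`:
`E(ν) = ν²·Γ(m)²·Γ(2iν+1−m)²·(p−2)/(16^{2iν}·Γ(1+iν)⁴)`. -/
noncomputable def E (m : ℕ) (p : ℂ) (ν : ℝ) : ℂ :=
  (ν:ℂ)^2 * Complex.Gamma (m:ℂ)^2 * Complex.Gamma (2*I*(ν:ℂ) + 1 - (m:ℂ))^2 * (p - 2) /
    (Complex.exp (2*I*(ν:ℂ)*(Real.log 16 : ℂ)) * Complex.Gamma (1 + I*(ν:ℂ))^4)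

/-- The normalized product `∏_{k=1}^n (1 - z/k)`. -/
noncomputable def PP (n : ℕ) (z : ℂ) : ℂ := ∏ k ∈ Finset.Icc 1 n, (1 - z / (k:ℂ))

lemma PP_succ (n : ℕ) (z : ℂ) : PP (n+1) z = PP n z * (1 - z / ((n:ℂ)+1)) := by
  unfold PP
  rw [Finset.prod_Icc_succ_top (by omega)]
  push_cast
  rfl

lemma PP_zero (n : ℕ) : PP n 0 = 1 := by simp [PP]

lemma PP_deriv (n : ℕ) :
    HasDerivAt (PP n) (-(∑ k ∈ Finset.Icc 1 n, (1:ℂ)/(k:ℂ))) 0 := by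
  induction n with
  | zero =>
    have : PP 0 = fun _ => 1 := by funext z; simp [PP]
    rw [this]; simpa using hasDerivAt_const (0:ℂ) (1:ℂ)
  | succ n ih =>
    have h : PP (n+1) = fun z => PP n z * (1 - z / ((n:ℂ)+1)) := by
      funext z; exact PP_succ n z
    rw [h]
    have h2 : HasDerivAt (fun z : ℂ => 1 - z / ((n:ℂ)+1)) (-(1/((n:ℂ)+1))) 0 :=
      ((hasDerivAt_id (0:ℂ)).div_const _).const_sub 1
    refine HasDerivAt.congr_deriv (ih.mul h2) ?_
    rw [Finset.sum_Icc_succ_top (by omega), PP_zero]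
    push_cast
    ring

lemma Gamma_PP (n : ℕ) (z : ℂ) (hz : ∀ k : ℕ, z ≠ k) :
    Complex.Gamma (z - n) * (z * ((-1)^n * (n.factorial : ℂ) * PP n z)) = Complex.Gamma (z+1) := by
  induction n with
  | zero =>
    rw [Complex.Gamma_add_one z (by simpa using hz 0)]
    simp [PP]; ring
  | succ n ih =>
    rw [← ih, PP_succ]
    have h1 : z - (n+1:ℕ) ≠ 0 := sub_ne_zero.mpr (hz _)
    have h2 := Complex.Gamma_add_one _ h1
    have h3 : z - (n+1:ℕ) + 1 = z - n := by push_cast; ring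
    rw [h3] at h2
    have h4 : ((n:ℂ)+1) ≠ 0 := by exact_mod_cast Nat.succ_ne_zero n
    rw [h2, Nat.factorial_succ]
    push_cast
    field_simp
    ring

/-- The analytic version of `E` in the variable `z = 2iν`. -/
noncomputable def GG (n : ℕ) (c z : ℂ) : ℂ :=
  c * Complex.Gamma (1 + z)^2 /
    (PP n z ^ 2 * (Complex.exp (z * (Real.log 16 : ℂ)) * Complex.Gamma (1 + z/2)^4))

lemma GG_zero (n : ℕ) (c : ℂ) : GG n c 0 = c := by simp [GG, PP_zero]

lemma GG_deriv (n : ℕ) (c : ℂ) :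
    HasDerivAt (GG n c)
      (c * (2 * (∑ k ∈ Finset.Icc 1 n, (1:ℂ)/(k:ℂ)) - (Real.log 16 : ℂ))) 0 := by
  have hG : HasDerivAt Complex.Gamma (-(Real.eulerMascheroniConstant : ℂ)) (1 + 0) := by
    simpa using Complex.hasDerivAt_Gamma_one
  have hG' : HasDerivAt Complex.Gamma (-(Real.eulerMascheroniConstant : ℂ)) (1 + 0/2) := by
    simpa using Complex.hasDerivAt_Gamma_one
  have h1 : HasDerivAt (fun z : ℂ => Complex.Gamma (1 + z))
      (-(Real.eulerMascheroniConstant : ℂ) * 1) 0 :=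
    hG.comp 0 ((hasDerivAt_id (0:ℂ)).const_add 1)
  have h2 : HasDerivAt (fun z : ℂ => Complex.Gamma (1 + z/2))
      (-(Real.eulerMascheroniConstant : ℂ) * (1/2)) 0 :=
    HasDerivAt.comp (h := fun z : ℂ => 1 + z/2) 0 hG'
      (((hasDerivAt_id (0:ℂ)).div_const 2).const_add 1)
  have h3 : HasDerivAt (fun z : ℂ => Complex.exp (z * (Real.log 16 : ℂ)))
      (Complex.exp (0 * (Real.log 16 : ℂ)) * (1 * (Real.log 16 : ℂ))) 0 :=
    ((hasDerivAt_id (0:ℂ)).mul_const _).cexp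
  have h := ((h1.pow 2).const_mul c).div (((PP_deriv n).pow 2).mul (h3.mul (h2.pow 4)))
    (by simp [PP_zero])
  refine HasDerivAt.congr_deriv h ?_
  simp [PP_zero]
  ring

lemma E_eq_GG (n : ℕ) (p : ℂ) (ν : ℝ) (hν : 0 < ν) :
    E (n+1) p ν = GG n ((2-p)/4) (2*I*(ν:ℂ)) := by
  have hz : ∀ k : ℕ, 2*I*(ν:ℂ) ≠ k := by
    intro k h
    have := congrArg Complex.im h
    simp at this
    exact hν.ne' this
  have hg := Gamma_PP n _ hz
  have hg0 : Complex.Gamma (2*I*(ν:ℂ)+1) ≠ 0 := by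
    apply Complex.Gamma_ne_zero_of_re_pos
    simp
  have hP : PP n (2*I*(ν:ℂ)) ≠ 0 := by
    intro h
    rw [h] at hg
    simp at hg
    exact hg0 hg.symm
  have hΓ : Complex.Gamma (1 + I*(ν:ℂ)) ≠ 0 := by
    apply Complex.Gamma_ne_zero_of_re_pos
    simp
  have e1 : 2*I*(ν:ℂ) + 1 - ((n+1:ℕ):ℂ) = 2*I*(ν:ℂ) - n := by push_cast; ring
  have e2 : 1 + 2*I*(ν:ℂ)/2 = 1 + I*(ν:ℂ) := by ring
  have e3 : Complex.Gamma ((n+1:ℕ):ℂ) = n.factorial := by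
    push_cast; exact Complex.Gamma_nat_eq_factorial n
  unfold E GG
  rw [e1, e2, e3, add_comm 1 (2*I*(ν:ℂ)), ← hg]
  have hs : ((-1:ℂ)^n)^2 = 1 := by rw [← pow_mul, mul_comm, pow_mul]; simp
  have he := Complex.exp_ne_zero (2*I*(ν:ℂ)*(Real.log 16 : ℂ))
  rw [div_eq_div_iff (by positivity) (by positivity)]
  generalize Complex.exp (2*I*(ν:ℂ)*(Real.log 16 : ℂ)) = e
  generalize PP n (2*I*(ν:ℂ)) = P
  generalize Complex.Gamma (2*I*(ν:ℂ) - n) = A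
  generalize Complex.Gamma (1 + I*(ν:ℂ)) = B
  generalize (-1:ℂ)^n = s at hs
  generalize (n.factorial : ℂ) = f
  have hI : I^2 = -1 := Complex.I_sq
  linear_combination (-(2-p) * (ν:ℂ)^2 * A^2 * f^2 * P^2 * e * B^4 * s^2) * hI + (-(p-2)* (ν:ℂ)^2 * A^2 * f^2 * P^2 * e * B^4) * hs

/-- for an integer `m ≥ 1` and `p ∈ ℂ` with `(2−p)/4` off the closed
negative real axis, `E(ν) → (2−p)/4` as `ν → 0⁺`, and
`(−(i/2)·Log E(ν) + (i/2)·Log((2−p)/4))/ν → 2(Σ_{k=1}^{m−1} 1/k − 2·ln 2)`. -/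
theorem stmt_17 (m : ℕ) (hm : 1 ≤ m) (p : ℂ)
    (hp : ¬ (((2 - p)/4).re ≤ 0 ∧ ((2 - p)/4).im = 0)) :
    Filter.Tendsto (fun ν : ℝ => E m p ν) (nhdsWithin 0 (Set.Ioi 0)) (nhds ((2 - p)/4)) ∧
    Filter.Tendsto
      (fun ν : ℝ =>
        (-(I/2) * Complex.log (E m p ν) + (I/2) * Complex.log ((2 - p)/4)) / (ν:ℂ))
      (nhdsWithin 0 (Set.Ioi 0))
      (nhds (2 * ((∑ k ∈ Finset.Icc 1 (m-1), (1:ℂ)/(k:ℂ)) - 2*(Real.log 2 : ℂ)))) := by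
  obtain ⟨n, rfl⟩ : ∃ n, m = n + 1 := ⟨m-1, by omega⟩
  rw [Nat.add_sub_cancel]
  set c : ℂ := (2-p)/4 with hc
  have hcs : c ∈ Complex.slitPlane := by
    rw [Complex.mem_slitPlane_iff]
    by_contra h
    push Not at h
    exact hp ⟨h.1, h.2⟩
  have hc0 : c ≠ 0 := Complex.slitPlane_ne_zero hcs
  have hline : HasDerivAt (fun ν : ℝ => 2*I*(ν:ℂ)) (2*I) 0 := by
    simpa using (Complex.ofRealCLM.hasDerivAt (x := (0:ℝ))).const_mul (2*I)
  have hG : HasDerivAt (fun ν : ℝ => GG n c (2*I*(ν:ℂ)))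
      ((c * (2 * (∑ k ∈ Finset.Icc 1 n, (1:ℂ)/(k:ℂ)) - (Real.log 16 : ℂ))) * (2*I)) 0 := by
    have h0 : HasDerivAt (GG n c)
      (c * (2 * (∑ k ∈ Finset.Icc 1 n, (1:ℂ)/(k:ℂ)) - (Real.log 16 : ℂ))) (2*I*((0:ℝ):ℂ)) := by
      simpa using GG_deriv n c
    exact HasDerivAt.comp (h := fun ν : ℝ => 2*I*(ν:ℂ)) 0 h0 hline
  have hG0 : GG n c (2*I*((0:ℝ):ℂ)) = c := by simp [GG_zero]
  have hev : ∀ᶠ ν : ℝ in nhdsWithin 0 (Set.Ioi 0), GG n c (2*I*(ν:ℂ)) = E (n+1) p ν := by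
    filter_upwards [self_mem_nhdsWithin] with ν hν
    exact (E_eq_GG n p ν hν).symm
  constructor
  · have h := hG.continuousAt.tendsto
    rw [hG0] at h
    exact (h.mono_left nhdsWithin_le_nhds).congr' hev
  · have hL := (hG.clog_real (by rw [hG0]; exact hcs)).const_mul (-(I/2))
    have hT := hL.tendsto_slope.mono_left
      (nhdsWithin_mono 0 (show Set.Ioi (0:ℝ) ⊆ {0}ᶜ from fun x hx => ne_of_gt hx))
    have hlog : Real.log 16 = 4 * Real.log 2 := by
      rw [show (16:ℝ) = 2^4 by norm_num, Real.log_pow]; norm_num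
    convert hT.congr' ?_ using 2
    · rw [hG0, hlog]
      push_cast
      field_simp
      linear_combination (2 * (∑ k ∈ Finset.Icc 1 n, (1:ℂ)/(k:ℂ)) - 4 * (Real.log 2:ℂ)) * Complex.I_sq
    · filter_upwards [hev] with ν hν
      rw [slope_def_module, hν, hG0, sub_zero, Complex.real_smul]
      push_cast
      ring
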